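/- Let m be an odd positive integer and m' an even nonnegative integer, and set ρ = (m + m'/2)/2 (so 2ρ is a positive integer). Define c(λ) = 2^{−2λ}·Γ(2λ) / (Γ(λ + m'/4 + 1/2)·Γ(λ + ρ)) for complex λ, and define the polynomial P(x) = [∏_{k=(m+1)/2}^{2ρ−(m+1)/2} (x − ρ + k)] · [∏_{k=1}^{2ρ−1} (x − ρ + k)], where empty products equal 1. Then there exists a nonzero constant c₀ ∈ ℂ such that for every real x ≠ 0, 1/(c(ix)·c(−ix)) = c₀ · x · P(ix) · cot(π(ix − ρ)). -/

import Mathlib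

theorem Complex.Gamma_mul_Gamma_neg_eq_prod_Icc {w : ℂ} (hw : Complex.sin (Real.pi * w) ≠ 0)
    {a b : ℕ} (hab : a ≤ b) :
    Complex.Gamma (w + b + 1) * Complex.Gamma (-w - a) =
      (∏ k ∈ Finset.Icc (a + 1) b, (w + k)) *
        ((-1) ^ (a + 1) * Real.pi / Complex.sin (Real.pi * w)) := by
  induction b, hab using Nat.le_induction with
  | base =>
    have hsin : Complex.sin (Real.pi * (w + a + 1)) =
        (-1) ^ (a + 1) * Complex.sin (Real.pi * w) := by
      rw [← Complex.sin_antiperiodic.add_nat_mul_eq]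
      congr 1
      push_cast
      ring
    have hpow : ((-1 : ℂ) ^ (a + 1)) * (-1) ^ (a + 1) = 1 := by
      rw [← mul_pow]
      simp
    have hrefl := Complex.Gamma_mul_Gamma_one_sub (w + a + 1)
    rw [show 1 - (w + a + 1) = -w - a by ring, hsin] at hrefl
    rw [hrefl, Finset.Icc_eq_empty (by omega), Finset.prod_empty, one_mul]
    field_simp
    linear_combination -hpow
  | succ b hb ih =>
    have hne : w + b + 1 ≠ 0 := by
      intro h
      apply hw
      rw [show (Real.pi : ℂ) * w = -((b + 1 : ℕ) * Real.pi) by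
        push_cast
        linear_combination (Real.pi : ℂ) * h]
      rw [Complex.sin_neg, Complex.sin_nat_mul_pi, neg_zero]
    rw [Finset.prod_Icc_succ_top (by omega)]
    push_cast
    rw [← add_assoc w, Complex.Gamma_add_one _ hne]
    linear_combination (w + b + 1) * ih

theorem Complex.Gamma_mul_Gamma_neg (z : ℂ) :
    Complex.Gamma z * Complex.Gamma (-z) = -Real.pi / (z * Complex.sin (Real.pi * z)) := by
  rcases eq_or_ne z 0 with rfl | hz
  · simp
  have h := Complex.Gamma_mul_Gamma_one_sub z
  rw [show 1 - z = -z + 1 by ring, Complex.Gamma_add_one _ (neg_ne_zero.mpr hz)] at h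
  rw [mul_comm z, ← div_div, neg_div, ← h]
  field_simp

theorem Complex.sin_pi_mul_ne_zero_of_im_ne_zero {w : ℂ} (hw : w.im ≠ 0) :
    Complex.sin (Real.pi * w) ≠ 0 := by
  rw [Complex.sin_ne_zero_iff]
  intro k hk
  rw [mul_comm (k : ℂ)] at hk
  have h := mul_left_cancel₀ (Complex.ofReal_ne_zero.mpr Real.pi_ne_zero) hk
  exact hw (by simp [h])

/-- Rank one Plancherel density, odd multiplicity case. Let `m` be odd positive, `m'` even
nonnegative, `ρ = (m + m'/2)/2`. With `c` the Harish-Chandra `c`-function and `P` the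
polynomial `[∏_{k=(m+1)/2}^{2ρ-(m+1)/2} (x - ρ + k)]·[∏_{k=1}^{2ρ-1} (x - ρ + k)]`, there is
a nonzero constant `c₀` with `1/(c(ix)c(-ix)) = c₀·x·P(ix)·cot(π(ix - ρ))` for all real
`x ≠ 0`. -/
theorem stmt_7 (m m' : ℕ) (hmodd : Odd m) (hmpos : 0 < m) (hm' : Even m') :
    let ρ : ℝ := ((m : ℝ) + (m' : ℝ) / 2) / 2
    let c : ℂ → ℂ := fun lam =>
      (2 : ℂ) ^ (-(2 * lam)) * Complex.Gamma (2 * lam) /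
        (Complex.Gamma (lam + (m' : ℂ) / 4 + 1 / 2) * Complex.Gamma (lam + (ρ : ℂ)))
    let P : ℂ → ℂ := fun X =>
      (∏ k ∈ Finset.Icc ((m + 1) / 2) (m + m' / 2 - (m + 1) / 2), (X - (ρ : ℂ) + (k : ℂ))) *
        ∏ k ∈ Finset.Icc 1 (m + m' / 2 - 1), (X - (ρ : ℂ) + (k : ℂ))
    ∃ c₀ : ℂ, c₀ ≠ 0 ∧ ∀ x : ℝ, x ≠ 0 →
      1 / (c (Complex.I * (x : ℂ)) * c (-(Complex.I * (x : ℂ)))) =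
        c₀ * (x : ℂ) * P (Complex.I * (x : ℂ)) *
          (Complex.cos ((Real.pi : ℂ) * (Complex.I * (x : ℂ) - (ρ : ℂ))) /
            Complex.sin ((Real.pi : ℂ) * (Complex.I * (x : ℂ) - (ρ : ℂ)))) := by
  obtain ⟨j, rfl⟩ := hmodd
  obtain ⟨q, rfl⟩ := hm'
  intro ρ c P
  have hρ : (ρ : ℂ) = (2 * j + 1 + q) / 2 := by
    simp only [ρ]
    push_cast
    ring
  refine ⟨(-1) ^ (j + q) * 4 * Real.pi * Complex.I, by simp [Real.pi_ne_zero], fun x hx ↦ ?_⟩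
  set z : ℂ := Complex.I * x with hz
  set w : ℂ := z - ρ with hw
  have hzw : z = w + (2 * j + 1 + q) / 2 := by rw [hw, hρ]; ring
  have hsin : Complex.sin (Real.pi * w) ≠ 0 :=
    Complex.sin_pi_mul_ne_zero_of_im_ne_zero (by simpa [hw, hz] using hx)
  have hP : P z = (∏ k ∈ Finset.Icc (j + 1) (j + q), (w + k)) *
      ∏ k ∈ Finset.Icc 1 (2 * j + q), (w + k) := by
    simp only [P, ← hw]
    congr 3 <;> omega
  have hΓ₁ := Complex.Gamma_mul_Gamma_neg_eq_prod_Icc hsin (Nat.le_add_right j q)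
  have hΓ₂ := Complex.Gamma_mul_Gamma_neg_eq_prod_Icc hsin (Nat.zero_le (2 * j + q))
  have hΓ := Complex.Gamma_mul_Gamma_neg (2 * z)
  have hsin2 : Complex.sin (Real.pi * (2 * z)) =
      (-1) ^ (q + 1) * (2 * Complex.sin (Real.pi * w) * Complex.cos (Real.pi * w)) := by
    rw [← Complex.sin_two_mul, show (Real.pi : ℂ) * (2 * z) =
      2 * (Real.pi * w) + (2 * j + 1 + q : ℕ) * Real.pi by rw [hzw]; push_cast; ring,
      Complex.sin_antiperiodic.add_nat_mul_eq, show 2 * j + 1 + q = 2 * j + (q + 1) by ring,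
      pow_add, pow_mul]
    simp
  have h2 : (2 : ℂ) ^ (-(2 * z)) * 2 ^ (2 * z) = 1 := by
    rw [← Complex.cpow_add _ _ two_ne_zero]
    simp
  have hc : 1 / (c z * c (-z)) =
      (Complex.Gamma (w + (j + q : ℕ) + 1) * Complex.Gamma (-w - j)) *
        (Complex.Gamma (w + (2 * j + q : ℕ) + 1) * Complex.Gamma (-w - (0 : ℕ))) /
        (Complex.Gamma (2 * z) * Complex.Gamma (-(2 * z))) := by
    simp only [c]
    rw [show z + ((q + q : ℕ) : ℂ) / 4 + 1 / 2 = w + (j + q : ℕ) + 1 by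
        rw [hzw]; push_cast; ring,
      show -z + ((q + q : ℕ) : ℂ) / 4 + 1 / 2 = -w - j by rw [hzw]; push_cast; ring,
      show z + (ρ : ℂ) = w + (2 * j + q : ℕ) + 1 by rw [hzw, hρ]; push_cast; ring,
      show -z + (ρ : ℂ) = -w - (0 : ℕ) by rw [hw]; push_cast; ring,
      show 2 * -z = -(2 * z) by ring, neg_neg, div_mul_div_comm, one_div_div,
      mul_mul_mul_comm ((2 : ℂ) ^ (-(2 * z))), h2, one_mul]
    ring
  rw [hc, hΓ₁, hΓ₂, hΓ, hsin2, hP]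
  have hpi : (Real.pi : ℂ) ≠ 0 := Complex.ofReal_ne_zero.mpr Real.pi_ne_zero
  rw [show (-1 : ℂ) ^ (j + q) * 4 * Real.pi * Complex.I * x = (-1) ^ (j + q) * 4 * Real.pi * z by
    rw [hz]; ring]
  field_simp
  ring
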